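/- Let q = p^m where p ≡ 3 (mod 8) is prime and m ≡ 2 (mod 4). Let x, a, b be integers with x² = q (so x = ±p^{m/2} and q = x² + 4·0²), q = a² + 2b² with a ≡ 1 (mod 4), and suppose x + a = −2. Then D = C_3^8 ∪ C_5^8 is a skew PDS corresponding to the (q,(q−1)/4,(q−11−6x)/16,(q−3+2x)/16)-PDS C_0^4. Moreover, for every 0 ≤ i ≤ 7, the set C_i^8 ∪ C_{i+2}^8 (indices of order-8 classes taken mod 8) is a skew PDS corresponding to the (q,(q−1)/4,(q−11−6x)/16,(q−3+2x)/16)-PDS C_{i+1}^4 (index mod 4). -/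

import Mathlib

open Finset

section Defs

variable {G : Type*} [AddCommGroup G] [Fintype G] [DecidableEq G]

/-- The multiset `Δ(D)` of internal differences `x - y` (for `x ≠ y` in `D`). -/
def intDiff (D : Finset G) : Multiset G :=
  ((D ×ˢ D).filter (fun p => p.1 ≠ p.2)).val.map (fun p => p.1 - p.2)

/-- The multiset `Δ(D, E)` of external differences `x - y` for `x ∈ D`, `y ∈ E`. -/
def extDiff (D E : Finset G) : Multiset G :=
  (D ×ˢ E).val.map (fun p => p.1 - p.2)

/-- The finset `G^*` of nonzero elements of `G`. -/
def Gstar (G : Type*) [AddCommGroup G] [Fintype G] [DecidableEq G] : Finset G :=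
  Finset.univ.erase 0

/-- `A` is a `(v, k, lam, mu)` partial difference set in `G`:
`Δ(A) = lam • A^* + mu • (G^* \ A)`. -/
def IsPDS (A : Finset G) (v k lam mu : ℕ) : Prop :=
  Fintype.card G = v ∧ A.card = k ∧
    intDiff A = lam • (A.erase 0).val + mu • (Gstar G \ A).val

/-- `D` is a `(v, k, lam, mu)` skew partial difference set corresponding to the
`(v, k, lam, mu)`-PDS `A`: `Δ(D) = lam • A^* + mu • (G^* \ A)`. -/
def IsSkewPDS (D A : Finset G) (v k lam mu : ℕ) : Prop :=
  IsPDS A v k lam mu ∧ D.card = k ∧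
    intDiff D = lam • (A.erase 0).val + mu • (Gstar G \ A).val

/-- `D` is an `(n, m, k₁, …, k_m; lam, mu)` disjoint partial difference family relative
to `T`: the `D i` are pairwise disjoint subsets of `G^*` of sizes `k i`, and
`∑ i, Δ(D i) = lam • T + mu • (G^* \ T)`. -/
def IsDPDF {ι : Type*} [Fintype ι] (D : ι → Finset G) (n m : ℕ) (k : ι → ℕ)
    (T : Finset G) (lam mu : ℕ) : Prop :=
  Fintype.card G = n ∧ Fintype.card ι = m ∧
    (∀ i, (0 : G) ∉ D i) ∧ (∀ i, (D i).card = k i) ∧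
    (Pairwise (fun i j => Disjoint (D i) (D j))) ∧
    ∑ i, intDiff (D i) = lam • T.val + mu • (Gstar G \ T).val

/-- `D` is an `(n, m, k₁, …, k_m; lam, mu)` external partial difference family relative
to `T`: the `D i` are pairwise disjoint subsets of `G^*` of sizes `k i`, and
`∑_{i ≠ j}, Δ(D i, D j) = lam • T + mu • (G^* \ T)`. -/
def IsEPDF {ι : Type*} [Fintype ι] [DecidableEq ι] (D : ι → Finset G) (n m : ℕ)
    (k : ι → ℕ) (T : Finset G) (lam mu : ℕ) : Prop :=
  Fintype.card G = n ∧ Fintype.card ι = m ∧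
    (∀ i, (0 : G) ∉ D i) ∧ (∀ i, (D i).card = k i) ∧
    (Pairwise (fun i j => Disjoint (D i) (D j))) ∧
    ∑ i, ∑ j ∈ Finset.univ.erase i, extDiff (D i) (D j)
      = lam • T.val + mu • (Gstar G \ T).val

/-- `D` is an `(n, m, k₁, …, k_m, lam)` disjoint difference family:
`∑ i, Δ(D i) = lam • G^*`. -/
def IsDDF {ι : Type*} [Fintype ι] (D : ι → Finset G) (n m : ℕ) (k : ι → ℕ)
    (lam : ℕ) : Prop :=
  Fintype.card G = n ∧ Fintype.card ι = m ∧
    (∀ i, (0 : G) ∉ D i) ∧ (∀ i, (D i).card = k i) ∧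
    (Pairwise (fun i j => Disjoint (D i) (D j))) ∧
    ∑ i, intDiff (D i) = lam • (Gstar G).val

/-- `D` is an `(n, m, k₁, …, k_m, lam)` external difference family:
`∑_{i ≠ j}, Δ(D i, D j) = lam • G^*`. -/
def IsEDF {ι : Type*} [Fintype ι] [DecidableEq ι] (D : ι → Finset G) (n m : ℕ)
    (k : ι → ℕ) (lam : ℕ) : Prop :=
  Fintype.card G = n ∧ Fintype.card ι = m ∧
    (∀ i, (0 : G) ∉ D i) ∧ (∀ i, (D i).card = k i) ∧
    (Pairwise (fun i j => Disjoint (D i) (D j))) ∧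
    ∑ i, ∑ j ∈ Finset.univ.erase i, extDiff (D i) (D j) = lam • (Gstar G).val

end Defs

section Cyclotomy

variable {F : Type*} [Field F] [Fintype F] [DecidableEq F]

/-- The cyclotomic class `C_i^e = α^i ⟨α^e⟩` of order `e` in the finite field `F`,
with respect to the primitive element `α`.  (Since `α` has multiplicative order at most
`|F| - 1`, letting `j` range over `0, …, |F| - 1` captures the whole class.) -/
def cycClass (α : F) (e i : ℕ) : Finset F :=
  (Finset.range (Fintype.card F)).image (fun j => α ^ (e * j + i))

/-- `α` is a primitive element of the finite field `F`: every nonzero element of `F`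
is a power of `α`. -/
def IsPrimitiveElt (α : F) : Prop :=
  ∀ x : F, x ≠ 0 → ∃ n : ℕ, α ^ n = x

end Cyclotomy


section SkewAux

set_option linter.unusedSectionVars false

variable {F : Type*} [Field F] [Fintype F] [DecidableEq F]

/-- Working context: `|F| = P²`, `P = 8t+3`, `α` primitive, Frobenius additive. -/
structure Ctx (α : F) (P t : ℕ) : Prop where
  hP : P = 8 * t + 3
  card : Fintype.card F = P ^ 2
  frob : ∀ x y : F, (x + y) ^ P = x ^ P + y ^ P
  prim : IsPrimitiveElt α

namespace Ctx

variable {α : F} {P t : ℕ}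

lemma card_sub (h : Ctx α P t) : Fintype.card F - 1 = 8 * ((4 * t + 1) * (2 * t + 1)) := by
  rw [h.card, h.hP, Nat.sub_eq_iff_eq_add (Nat.one_le_pow _ _ (by omega))]; ring

lemma ne0 (h : Ctx α P t) : α ≠ 0 := by
  rintro rfl
  have h1 : Fintype.card F ≤ 2 := by
    rw [← Finset.card_univ]
    refine le_trans (Finset.card_le_card (t := {0, 1}) ?_) Finset.card_le_two
    intro x _
    by_cases hx : x = 0
    · simp [hx]
    · obtain ⟨n, hn⟩ := h.prim x hx
      rcases Nat.eq_zero_or_pos n with rfl | hn0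
      · simp at hn; simp [hn]
      · rw [zero_pow hn0.ne'] at hn; exact absurd hn.symm hx
  have := h.card_sub
  have : 0 < (4 * t + 1) * (2 * t + 1) := by positivity
  omega

lemma order (h : Ctx α P t) : orderOf α = 8 * ((4 * t + 1) * (2 * t + 1)) := by
  rw [← h.card_sub]
  have h1 : α ^ (Fintype.card F - 1) = 1 := FiniteField.pow_card_sub_one_eq_one α h.ne0
  have hpos : 0 < Fintype.card F - 1 := by rw [h.card_sub]; positivity
  apply le_antisymm (orderOf_le_of_pow_eq_one hpos h1)
  have hop : 0 < orderOf α := orderOf_pos_iff.mpr (isOfFinOrder_iff_pow_eq_one.mpr ⟨_, hpos, h1⟩)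
  have : (univ.erase (0 : F)) ⊆ (range (orderOf α)).image (fun j => α ^ j) := by
    intro x hx
    obtain ⟨n, hn⟩ := h.prim x (Finset.ne_of_mem_erase hx)
    rw [Finset.mem_image]
    exact ⟨n % orderOf α, Finset.mem_range.mpr (Nat.mod_lt _ hop), by rw [pow_mod_orderOf, hn]⟩
  have h2 := (Finset.card_le_card this).trans Finset.card_image_le
  simpa [Finset.card_erase_of_mem] using h2

lemma pow_eq (h : Ctx α P t) {i j : ℕ} : α ^ i = α ^ j ↔ i ≡ j [MOD 8 * ((4 * t + 1) * (2 * t + 1))] := by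
  rw [← h.order]
  have := pow_eq_pow_iff_modEq (x := Units.mk0 α h.ne0) (n := i) (m := j)
  rw [← orderOf_units, Units.val_mk0] at this
  rw [← this, Units.ext_iff]; simp

lemma mod8 (h : Ctx α P t) {i j : ℕ} (e : α ^ i = α ^ j) : i % 8 = j % 8 :=
  (h.pow_eq.mp e).of_mul_right _

lemma neg_one (h : Ctx α P t) : α ^ (4 * ((4 * t + 1) * (2 * t + 1))) = -1 := by
  have h1 : (α ^ (4 * ((4 * t + 1) * (2 * t + 1)))) ^ 2 = 1 := by
    rw [← pow_mul, ← pow_zero α, h.pow_eq, Nat.modEq_zero_iff_dvd]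
    exact ⟨1, by ring⟩
  rcases mul_self_eq_one_iff.mp ((sq _).symm.trans h1) with h2 | h2
  · exfalso
    rw [← pow_zero α, h.pow_eq, Nat.modEq_zero_iff_dvd] at h2
    have := Nat.le_of_dvd (by positivity) h2
    have : 0 < (4 * t + 1) * (2 * t + 1) := by positivity
    omega
  · exact h2

lemma two_ne (h : Ctx α P t) : (2 : F) ≠ 0 := by
  intro h2
  have h1 : α ^ (4 * ((4 * t + 1) * (2 * t + 1))) = α ^ 0 := by
    rw [h.neg_one, pow_zero]; linear_combination -h2
  rw [h.pow_eq, Nat.modEq_zero_iff_dvd] at h1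
  have := Nat.le_of_dvd (by positivity) h1
  have : 0 < (4 * t + 1) * (2 * t + 1) := by positivity
  omega

lemma ex (h : Ctx α P t) {y : F} (hy : y ≠ 0) : ∃ n : ℕ, y = α ^ n := by
  obtain ⟨n, hn⟩ := h.prim y hy; exact ⟨n, hn.symm⟩

lemma frob_neg (h : Ctx α P t) (x : F) : (-x) ^ P = -x ^ P := by
  have : Odd P := ⟨4 * t + 1, by rw [h.hP]; ring⟩
  exact this.neg_pow x

lemma frob_frob (h : Ctx α P t) (x : F) : (x ^ P) ^ P = x := by
  rw [← pow_mul, ← sq, ← h.card, FiniteField.pow_card]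

end Ctx

/-- The fixed field of `y ↦ y^P`, as a finset. -/
def KK (F : Type*) [Field F] [Fintype F] [DecidableEq F] (P : ℕ) : Finset F :=
  univ.filter (fun y => y ^ P = y)

lemma mem_KK {P : ℕ} {y : F} : y ∈ KK F P ↔ y ^ P = y := by simp [KK]

/-- autocorrelation -/
def RR (f : F → ℤ) (d : F) : ℤ := ∑ y, f (y + d) * f y

namespace Ctx

variable {α : F} {P t : ℕ}

/-- trace-zero element -/
def tau (α : F) (t : ℕ) : F := α ^ (4 * t + 2)

lemma tau_ne (h : Ctx α P t) : tau α t ≠ 0 := pow_ne_zero _ h.ne0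

lemma tau_pow (h : Ctx α P t) : (tau α t) ^ P = - tau α t := by
  have : tau α t ^ P = tau α t * α ^ (4 * ((4 * t + 1) * (2 * t + 1))) := by
    rw [tau, ← pow_mul, ← pow_add, h.hP]; congr 1; ring
  rw [this, h.neg_one]; ring

lemma K_zero (h : Ctx α P t) : (0 : F) ∈ KK F P := by
  rw [mem_KK, zero_pow]; rw [h.hP]; omega

lemma K_add (h : Ctx α P t) {x y : F} (hx : x ∈ KK F P) (hy : y ∈ KK F P) : x + y ∈ KK F P := by
  rw [mem_KK] at *; rw [h.frob, hx, hy]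

lemma K_neg (h : Ctx α P t) {x : F} (hx : x ∈ KK F P) : -x ∈ KK F P := by
  rw [mem_KK] at *; rw [h.frob_neg, hx]

lemma K_mul {x y : F} (hx : x ∈ KK F P) (hy : y ∈ KK F P) : x * y ∈ KK F P := by
  rw [mem_KK] at *; rw [mul_pow, hx, hy]

lemma K_inv {x : F} (hx : x ∈ KK F P) : x⁻¹ ∈ KK F P := by
  rw [mem_KK] at *; rw [inv_pow, hx]

lemma two_mem (h : Ctx α P t) : (2 : F) ∈ KK F P := by
  have : (1 : F) ∈ KK F P := by simp [mem_KK]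
  rw [show (2 : F) = 1 + 1 by norm_num]; exact h.K_add this this

lemma sumKK (h : Ctx α P t) {M : Type*} [AddCommMonoid M] (g : F → M) :
    ∑ y, g y = ∑ c ∈ KK F P, ∑ s ∈ KK F P, g (c * tau α t + s) := by
  rw [← Finset.sum_product']
  symm
  have h2 := h.two_ne
  have ht := h.tau_ne
  have h2P : (2 : F) ^ P = 2 := mem_KK.mp h.two_mem
  apply Finset.sum_bij' (fun x _ => x.1 * tau α t + x.2)
    (fun y _ => ((y - y ^ P) / (2 * tau α t), (y + y ^ P) / 2))
  · simp
  · intro y _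
    have hf := h.frob_frob y
    rw [Finset.mem_product, mem_KK, mem_KK]
    constructor
    · simp only
      rw [div_pow, mul_pow, h.tau_pow, h2P, sub_eq_add_neg, h.frob, h.frob_neg, hf]
      field_simp; ring
    · simp only
      rw [div_pow, h2P, h.frob, hf, add_comm]
  · rintro ⟨c, s⟩ hcs
    rw [Finset.mem_product, mem_KK, mem_KK] at hcs
    obtain ⟨hc, hs⟩ := hcs
    simp only at hc hs ⊢
    rw [h.frob, mul_pow, h.tau_pow, hc, hs]
    ext
    · simp only; field_simp; ring
    · simp only; field_simp; ring
  · intro y _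
    simp only; field_simp; ring
  · simp

lemma K_card (h : Ctx α P t) : (KK F P).card = P := by
  have := h.sumKK (fun _ => (1 : ℕ))
  simp [h.card] at this
  nlinarith [this]

lemma sum_shift (h : Ctx α P t) (g : F → ℤ) {s : F} (hs : s ∈ KK F P) (y : F) :
    ∑ u ∈ KK F P, g (y + s + u) = ∑ u ∈ KK F P, g (y + u) := by
  apply Finset.sum_bij' (fun u _ => s + u) (fun u _ => -s + u)
  · intro u hu; exact h.K_add hs hu
  · intro u hu; exact h.K_add (h.K_neg hs) hu
  · simp
  · simp
  · intro u _; rw [add_assoc]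

lemma sum_scale (g : F → ℤ) {c : F} (hc : c ∈ KK F P) (hc0 : c ≠ 0) :
    ∑ u ∈ KK F P, g (c * u) = ∑ u ∈ KK F P, g u := by
  apply Finset.sum_bij' (fun u _ => c * u) (fun u _ => c⁻¹ * u)
  · intro u hu; exact K_mul hc hu
  · intro u hu; exact K_mul (K_inv hc) hu
  · intros; field_simp
  · intros; field_simp
  · intros; rfl

lemma A_scale (f : F → ℤ) (χ : F → ℤ) 
    (hf : ∀ c ∈ KK F P, c ≠ 0 → ∀ y, f (c * y) = χ c * f y) {c : F} (hc : c ∈ KK F P)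
    (hc0 : c ≠ 0) (y : F) :
    ∑ u ∈ KK F P, f (c * y + u) = χ c * ∑ u ∈ KK F P, f (y + u) := by
  rw [← sum_scale (fun u => f (c * y + u)) hc hc0, Finset.mul_sum]
  apply Finset.sum_congr rfl
  intro u _
  rw [← mul_add, hf c hc hc0]

/-- Main identity. -/
lemma main_R (h : Ctx α P t) (f : F → ℤ) (χ : F → ℤ) (hχ : ∀ c ∈ KK F P, c ≠ 0 → χ c ^ 2 = 1)
    (hf : ∀ c ∈ KK F P, c ≠ 0 → ∀ y, f (c * y) = χ c * f y) :
    RR f 0 + ((P : ℤ) - 1) * RR f 1 = (∑ u ∈ KK F P, f u) ^ 2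
      + ((P : ℤ) - 1) * (∑ u ∈ KK F P, f (tau α t + u)) ^ 2 := by
  have hcard : (((KK F P).erase 0).card : ℤ) = (P : ℤ) - 1 := by
    rw [Finset.card_erase_of_mem h.K_zero, h.K_card, Nat.cast_sub (by rw [h.hP]; omega)]; simp
  have e1 : ∑ u ∈ KK F P, RR f u = RR f 0 + ((P : ℤ) - 1) * RR f 1 := by
    rw [← Finset.add_sum_erase _ _ h.K_zero, ← hcard, ← nsmul_eq_mul, ← Finset.sum_const]
    congr 1
    apply Finset.sum_congr rfl
    intro u hu
    obtain ⟨hu0, huK⟩ := Finset.mem_erase.mp hu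
    unfold RR
    rw [← Equiv.sum_comp (Equiv.mulLeft₀ u hu0)]
    apply Finset.sum_congr rfl
    intro y _
    have : u * y + u = u * (y + 1) := by ring
    simp only [Equiv.mulLeft₀_apply]
    rw [this, hf u huK hu0, hf u huK hu0]
    linear_combination (f (y + 1) * f y) * hχ u huK hu0
  have e2 : ∑ u ∈ KK F P, RR f u = ∑ c ∈ KK F P, (∑ u ∈ KK F P, f (c * tau α t + u)) ^ 2 := by
    unfold RR
    rw [Finset.sum_comm, h.sumKK]
    apply Finset.sum_congr rfl
    intro c _
    rw [sq, Finset.mul_sum]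
    apply Finset.sum_congr rfl
    intro s hs
    rw [← Finset.sum_mul, h.sum_shift f hs]
  rw [← e1, e2, ← Finset.add_sum_erase _ _ h.K_zero]
  congr 1
  · simp
  · rw [← hcard, ← nsmul_eq_mul, ← Finset.sum_const]
    apply Finset.sum_congr rfl
    intro c hc
    obtain ⟨hc0, hcK⟩ := Finset.mem_erase.mp hc
    rw [A_scale f χ hf hcK hc0, mul_pow, hχ c hcK hc0, one_mul]

lemma RR_scale (f : F → ℤ) {d : F} (hd : d ≠ 0) (e : F) :
    RR (fun y => f (d * y)) e = RR f (d * e) := by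
  unfold RR
  rw [← Equiv.sum_comp (Equiv.mulLeft₀ d hd) (fun y => f (y + d * e) * f y)]
  simp [mul_add]

/-- averaging -/
lemma avg (h : Ctx α P t) (g : F → ℤ) (n : ℕ) (s : ℤ) (h0 : g 0 = 0)
    (hs : ∀ y ≠ 0, ∑ k ∈ range n, g (α ^ k * y) = s) :
    (n : ℤ) * ∑ y, g y = ((P : ℤ) ^ 2 - 1) * s := by
  have e1 : ∀ k : ℕ, ∑ y, g (α ^ k * y) = ∑ y, g y := fun k =>
    Equiv.sum_comp (Equiv.mulLeft₀ (α ^ k) (pow_ne_zero _ h.ne0)) g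
  have e2 : ∑ y, ∑ k ∈ range n, g (α ^ k * y) = (n : ℤ) * ∑ y, g y := by
    rw [Finset.sum_comm]; simp [e1]
  rw [← e2, ← Finset.add_sum_erase _ _ (Finset.mem_univ (0 : F))]
  rw [Finset.sum_congr rfl (fun y hy => hs y (Finset.ne_of_mem_erase hy))]
  rw [Finset.sum_const, Finset.card_erase_of_mem (Finset.mem_univ _), Finset.card_univ, h.card,
    nsmul_eq_mul, Nat.cast_sub (Nat.one_le_pow _ _ (by rw [h.hP]; omega))]
  simp [h0]

/-- even case -/
lemma even_R (h : Ctx α P t) (g : F → ℤ) (s : ℤ) (h0 : g 0 = 0) (h01 : ∀ y, g y ^ 2 = g y)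
    (hf : ∀ c ∈ KK F P, c ≠ 0 → ∀ y, g (c * y) = g y)
    (hs : ∑ y, g y = s * ((P : ℤ) - 1)) {d : F} (hd : d ≠ 0) :
    RR g d = ((P : ℤ) - 1) * g d + (s - g d) ^ 2 - s := by
  set f : F → ℤ := fun y => g (d * y) with hfdef
  have hf' : ∀ c ∈ KK F P, c ≠ 0 → ∀ y, f (c * y) = 1 * f y := by
    intro c hc hc0 y
    simp only [hfdef, one_mul]
    rw [← hf c hc hc0 (d * y)]; congr 1; ring
  have hm := h.main_R f (fun _ => 1) (by simp) hf'
  have hcard : (((KK F P).erase 0).card : ℤ) = (P : ℤ) - 1 := by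
    rw [Finset.card_erase_of_mem h.K_zero, h.K_card, Nat.cast_sub (by rw [h.hP]; omega)]; simp
  have hA0 : ∑ u ∈ KK F P, f u = ((P : ℤ) - 1) * g d := by
    rw [← Finset.add_sum_erase _ _ h.K_zero, ← hcard, ← nsmul_eq_mul, ← Finset.sum_const]
    rw [show f 0 = 0 by simp [hfdef, h0], zero_add]
    apply Finset.sum_congr rfl
    intro u hu
    obtain ⟨hu0, huK⟩ := Finset.mem_erase.mp hu
    have := hf' u huK hu0 1
    rw [mul_one, one_mul] at this
    rw [this]; simp [hfdef]
  have hsf : ∑ y, f y = s * ((P : ℤ) - 1) := by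
    rw [← hs]; exact Equiv.sum_comp (Equiv.mulLeft₀ d hd) g
  have hA : s * ((P : ℤ) - 1) = ((P : ℤ) - 1) * g d
      + ((P : ℤ) - 1) * ∑ u ∈ KK F P, f (tau α t + u) := by
    rw [← hsf, h.sumKK, ← Finset.add_sum_erase _ _ h.K_zero, ← hA0]
    congr 1
    · simp
    · rw [← hcard, ← nsmul_eq_mul, ← Finset.sum_const]
      apply Finset.sum_congr rfl
      intro c hc
      obtain ⟨hc0, hcK⟩ := Finset.mem_erase.mp hc
      rw [A_scale f (fun _ => 1) hf' hcK hc0, one_mul]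
  have hR0 : RR f 0 = s * ((P : ℤ) - 1) := by
    rw [← hsf]; unfold RR
    apply Finset.sum_congr rfl
    intro y _; rw [add_zero, ← sq]; exact h01 _
  have hR1 : RR f 1 = RR g d := by
    have := RR_scale g hd 1
    rwa [mul_one] at this
  have hne : (P : ℤ) - 1 ≠ 0 := by rw [h.hP]; push_cast; omega
  have hA' : ∑ u ∈ KK F P, f (tau α t + u) = s - g d := by
    apply mul_left_cancel₀ hne; linarith
  rw [hR0, hR1, hA0, hA'] at hm
  apply mul_left_cancel₀ hne
  linear_combination hm + ((P : ℤ) - 1) ^ 2 * h01 d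

end Ctx

/-- extend a function of the discrete logarithm to the field, by zero at zero -/
noncomputable def lft (α : F) (φ : ℕ → ℤ) (y : F) : ℤ :=
  open Classical in
  if h : y ≠ 0 ∧ ∃ n : ℕ, α ^ n = y then φ h.2.choose else 0

/-- the sign function of the set `D` -/
def gg (n : ℕ) : ℤ :=
  if n % 8 = 3 ∨ n % 8 = 5 then 1 else if n % 8 = 1 ∨ n % 8 = 7 then -1 else 0

lemma gg_mod (n : ℕ) : gg n = gg (n % 8) := by simp [gg]

lemma gg_four (n : ℕ) : gg (n + 4) = - gg n := by
  have : n % 8 = 0 ∨ n % 8 = 1 ∨ n % 8 = 2 ∨ n % 8 = 3 ∨ n % 8 = 4 ∨ n % 8 = 5 ∨ n % 8 = 6 ∨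
    n % 8 = 7 := by omega
  rcases this with h | h | h | h | h | h | h | h <;> simp [gg, Nat.add_mod, h]

lemma gg_three (n : ℕ) : gg (3 * n) = - gg n := by
  have : n % 8 = 0 ∨ n % 8 = 1 ∨ n % 8 = 2 ∨ n % 8 = 3 ∨ n % 8 = 4 ∨ n % 8 = 5 ∨ n % 8 = 6 ∨
    n % 8 = 7 := by omega
  rcases this with h | h | h | h | h | h | h | h <;> simp [gg, Nat.mul_mod, h]

lemma gg_sq_succ (n : ℕ) : gg n ^ 2 + gg (n + 1) ^ 2 = 1 := by
  have : n % 8 = 0 ∨ n % 8 = 1 ∨ n % 8 = 2 ∨ n % 8 = 3 ∨ n % 8 = 4 ∨ n % 8 = 5 ∨ n % 8 = 6 ∨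
    n % 8 = 7 := by omega
  rcases this with h | h | h | h | h | h | h | h <;> simp [gg, Nat.add_mod, h]

lemma gg_congr {m n : ℕ} (e : m % 8 = n % 8) : gg m = gg n := by rw [gg_mod m, e, ← gg_mod]

lemma gg_four_mul (n j : ℕ) : gg (n + 4 * j) = (-1) ^ j * gg n := by
  induction j with
  | zero => simp
  | succ j ih => rw [show n + 4 * (j + 1) = n + 4 * j + 4 by ring, gg_four, ih, pow_succ]; ring

lemma gg_sq_sq (n : ℕ) : (gg n ^ 2) ^ 2 = gg n ^ 2 := by
  unfold gg; split_ifs <;> norm_num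

namespace Ctx

variable {α : F} {P t : ℕ}

lemma lft_zero (φ : ℕ → ℤ) : lft α φ 0 = 0 := by simp [lft]

lemma lft_pow (h : Ctx α P t) (φ : ℕ → ℤ) (hφ : ∀ n, φ n = φ (n % 8)) (j : ℕ) :
    lft α φ (α ^ j) = φ j := by
  have hh : α ^ j ≠ 0 ∧ ∃ n : ℕ, α ^ n = α ^ j := ⟨pow_ne_zero _ h.ne0, j, rfl⟩
  rw [lft, dif_pos hh, hφ, h.mod8 hh.2.choose_spec, ← hφ]

lemma K_ex (h : Ctx α P t) {c : F} (hc : c ∈ KK F P) (hc0 : c ≠ 0) :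
    ∃ j : ℕ, c = α ^ ((8 * t + 4) * j) := by
  obtain ⟨n, rfl⟩ := h.ex hc0
  rw [mem_KK, ← pow_mul, eq_comm, h.pow_eq, Nat.modEq_iff_dvd' (by rw [h.hP]; nlinarith)] at hc
  have e : n * P - n = (8 * t + 2) * n := by
    rw [h.hP, Nat.sub_eq_iff_eq_add (by nlinarith)]; ring
  rw [e, show 8 * ((4 * t + 1) * (2 * t + 1)) = (8 * t + 2) * (8 * t + 4) by ring] at hc
  obtain ⟨j, rfl⟩ := Nat.dvd_of_mul_dvd_mul_left (by omega) hc
  exact ⟨j, rfl⟩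

/-- the function `f` -/
noncomputable def ff (α : F) : F → ℤ := lft α gg

lemma ff_zero : ff α 0 = 0 := lft_zero _
lemma ff_pow (h : Ctx α P t) (j : ℕ) : ff α (α ^ j) = gg j := h.lft_pow gg gg_mod j

lemma ff_four (h : Ctx α P t) (y : F) : ff α (α ^ 4 * y) = - ff α y := by
  by_cases hy : y = 0
  · simp [hy, ff_zero]
  · obtain ⟨n, rfl⟩ := h.ex hy
    rw [← pow_add, h.ff_pow, h.ff_pow, add_comm, gg_four]

lemma ff_neg (h : Ctx α P t) (y : F) : ff α (-y) = - ff α y := by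
  by_cases hy : y = 0
  · simp [hy, ff_zero]
  · obtain ⟨n, rfl⟩ := h.ex hy
    have : -α ^ n = α ^ (n + 4 * ((4 * t + 1) * (2 * t + 1))) := by
      rw [pow_add, h.neg_one]; ring
    rw [this, h.ff_pow, h.ff_pow, gg_four_mul, Odd.neg_one_pow]
    · ring
    · exact ⟨4 * t ^ 2 + 3 * t, by ring⟩

lemma ff_frob (h : Ctx α P t) (y : F) : ff α (y ^ P) = - ff α y := by
  by_cases hy : y = 0
  · rw [hy, zero_pow (by rw [h.hP]; omega), ff_zero]; rfl
  · obtain ⟨n, rfl⟩ := h.ex hy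
    rw [← pow_mul, h.ff_pow, h.ff_pow, ← gg_three]
    apply gg_congr
    rw [h.hP, show n * (8 * t + 3) = 8 * (n * t) + 3 * n by ring]; omega

/-- the quadratic character on `K` -/
def chi (t : ℕ) (c : F) : ℤ := if c ^ (4 * t + 1) = 1 then 1 else -1

lemma chi_sq (c : F) : chi t c ^ 2 = 1 := by unfold chi; split_ifs <;> norm_num

lemma chi_pow (h : Ctx α P t) (j : ℕ) : chi t (α ^ ((8 * t + 4) * j)) = (-1) ^ j := by
  have e : (α ^ ((8 * t + 4) * j)) ^ (4 * t + 1) = (-1) ^ j := by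
    rw [← h.neg_one, ← pow_mul, ← pow_mul]; congr 1; ring
  have h2 : (-1 : F) ≠ 1 := by
    intro e; apply h.two_ne; linear_combination -e
  unfold chi
  rw [e]
  rcases Nat.even_or_odd j with hj | hj
  · simp [hj.neg_one_pow]
  · simp [hj.neg_one_pow, h2]

lemma chi_cast (h : Ctx α P t) {c : F} (hc : c ∈ KK F P) (hc0 : c ≠ 0) :
    ((chi t c : ℤ) : F) = c ^ (4 * t + 1) := by
  obtain ⟨j, rfl⟩ := h.K_ex hc hc0
  rw [h.chi_pow, ← pow_mul]
  push_cast
  rw [← h.neg_one, ← pow_mul]; congr 1; ring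

lemma ff_K (h : Ctx α P t) (c : F) (hc : c ∈ KK F P) (hc0 : c ≠ 0) (y : F) :
    ff α (c * y) = chi t c * ff α y := by
  obtain ⟨j, rfl⟩ := h.K_ex hc hc0
  by_cases hy : y = 0
  · simp [hy, ff_zero]
  · obtain ⟨n, rfl⟩ := h.ex hy
    rw [← pow_add, h.ff_pow, h.ff_pow, h.chi_pow, ← gg_four_mul]
    apply gg_congr
    rw [show (8 * t + 4) * j = 8 * (t * j) + 4 * j by ring]; omega

lemma sum_negK (h : Ctx α P t) (g : F → ℤ) :
    ∑ u ∈ KK F P, g (-u) = ∑ u ∈ KK F P, g u :=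
  Finset.sum_bij' (fun u _ => -u) (fun u _ => -u) (fun _ hu => h.K_neg hu)
    (fun _ hu => h.K_neg hu) (fun _ _ => neg_neg _) (fun _ _ => neg_neg _) (fun _ _ => rfl)

/-- `h_d` -/
noncomputable def hh (α : F) (P t : ℕ) (d : F) : ℤ := ∑ u ∈ KK F P, ff α (d * (tau α t + u))

lemma R_zero (h : Ctx α P t) : 2 * RR (ff α) 0 = (P : ℤ) ^ 2 - 1 := by
  have := h.avg (fun y => ff α y ^ 2) 2 1 (by simp [ff_zero]) (by
    intro y hy
    obtain ⟨n, rfl⟩ := h.ex hy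
    simp only [Finset.sum_range_succ, Finset.sum_range_zero, ← pow_add, h.ff_pow]
    rw [← gg_sq_succ n, add_comm 1 n]; simp)
  unfold RR
  simp only [add_zero, ← sq]
  push_cast at this
  linarith

lemma R_eq (h : Ctx α P t) {d : F} (hd : d ≠ 0) :
    2 * RR (ff α) d = 2 * (hh α P t d) ^ 2 - ((P : ℤ) + 1) := by
  have hm := h.main_R (fun y => ff α (d * y)) (chi t) (fun c _ _ => chi_sq c) (by
    intro c hc hc0 y
    rw [← h.ff_K c hc hc0, mul_left_comm])
  have hA : ∑ u ∈ KK F P, ff α (d * u) = 0 := by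
    have := h.sum_negK (fun u => ff α (d * u))
    simp only [mul_neg, h.ff_neg, Finset.sum_neg_distrib] at this
    omega
  rw [RR_scale _ hd, RR_scale _ hd, hA, mul_zero, mul_one] at hm
  have h0 := h.R_zero
  have hne : (P : ℤ) - 1 ≠ 0 := by rw [h.hP]; push_cast; omega
  apply mul_left_cancel₀ hne
  change _ = 0 ^ 2 + ((P : ℤ) - 1) * (hh α P t d) ^ 2 at hm
  linear_combination 2 * hm - h0

lemma hh_tau (h : Ctx α P t) : hh α P t (tau α t) = 0 := by
  have : hh α P t (tau α t) = - hh α P t (tau α t) := by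
    unfold hh
    rw [← Finset.sum_neg_distrib, ← h.sum_negK (fun u => ff α (tau α t * (tau α t + u)))]
    apply Finset.sum_congr rfl
    intro u hu
    rw [← h.ff_frob, mul_pow, h.frob, h.tau_pow, mem_KK.mp hu]
    congr 1; ring
  omega

lemma R_four (h : Ctx α P t) (d : F) : RR (ff α) (α ^ 4 * d) = RR (ff α) d := by
  rw [← RR_scale _ (pow_ne_zero _ h.ne0)]
  unfold RR
  simp [h.ff_four]

lemma R_mod (h : Ctx α P t) (n : ℕ) : RR (ff α) (α ^ n) = RR (ff α) (α ^ (n % 4)) := by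
  have : ∀ k m : ℕ, RR (ff α) (α ^ (4 * k + m)) = RR (ff α) (α ^ m) := by
    intro k m
    induction k with
    | zero => simp
    | succ k ih => rw [show 4 * (k + 1) + m = 4 + (4 * k + m) by ring, pow_add, h.R_four, ih]
  conv_lhs => rw [← Nat.div_add_mod n 4, this]

lemma R_frob (h : Ctx α P t) (d : F) : RR (ff α) (d ^ P) = RR (ff α) d := by
  unfold RR
  let e : F ≃ F := ⟨fun y => y ^ P, fun y => y ^ P, h.frob_frob, h.frob_frob⟩
  rw [← Equiv.sum_comp e]
  apply Finset.sum_congr rfl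
  intro y _
  change ff α (y ^ P + d ^ P) * ff α (y ^ P) = _
  rw [← h.frob, h.ff_frob, h.ff_frob]; ring

lemma sum_ff (h : Ctx α P t) : ∑ y, ff α y = 0 := by
  have : ∑ y, ff α (-y) = ∑ y, ff α y := Equiv.sum_comp (Equiv.neg F) (ff α)
  simp only [h.ff_neg, Finset.sum_neg_distrib] at this
  omega

lemma R_sum (h : Ctx α P t) : RR (ff α) 1 + RR (ff α) (α ^ 1) + RR (ff α) (α ^ 2)
    + RR (ff α) (α ^ 3) = -2 := by
  have e1 : ∑ d, RR (ff α) d = 0 := by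
    unfold RR
    rw [Finset.sum_comm]
    apply Finset.sum_eq_zero
    intro y _
    have : ∑ i, ff α (y + i) = ∑ i, ff α i := Equiv.sum_comp (Equiv.addLeft y) (ff α)
    rw [← Finset.sum_mul, this, h.sum_ff, zero_mul]
  have e2 := h.avg (fun d => if d = 0 then 0 else RR (ff α) d) 4 (RR (ff α) 1 + RR (ff α) (α ^ 1) + RR (ff α) (α ^ 2)
    + RR (ff α) (α ^ 3)) (by simp) (by
    intro y hy
    obtain ⟨n, rfl⟩ := h.ex hy
    simp only [Finset.sum_range_succ, Finset.sum_range_zero, ← pow_add, pow_ne_zero _ h.ne0, if_false]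
    rw [h.R_mod (0 + n), h.R_mod (1 + n), h.R_mod (2 + n), h.R_mod (3 + n)]
    have : n % 4 = 0 ∨ n % 4 = 1 ∨ n % 4 = 2 ∨ n % 4 = 3 := by omega
    rcases this with h | h | h | h <;> simp [Nat.add_mod, h] <;> ring)
  have e3 : ∑ d : F, (if d = 0 then 0 else RR (ff α) d) = - RR (ff α) 0 := by
    rw [← Finset.add_sum_erase _ _ (Finset.mem_univ (0 : F))] at e1 ⊢
    rw [if_pos rfl, zero_add, eq_neg_iff_add_eq_zero, add_comm, ← e1]
    congr 1
    apply Finset.sum_congr rfl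
    intro y hy
    rw [if_neg (Finset.ne_of_mem_erase hy)]
  rw [e3] at e2
  have h0 := h.R_zero
  have hne : (P : ℤ) ^ 2 - 1 ≠ 0 := by
    rw [h.hP]; push_cast; intro e
    have : (0 : ℤ) ≤ t := by positivity
    nlinarith
  apply mul_left_cancel₀ hne
  push_cast at e2
  linear_combination -e2 - 2 * h0

lemma R_two (h : Ctx α P t) : 2 * RR (ff α) (α ^ 2) = - ((P : ℤ) + 1) := by
  have := h.R_eq h.tau_ne
  rw [h.hh_tau] at this
  rw [tau, h.R_mod, show (4 * t + 2) % 4 = 2 by omega] at this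
  linarith

lemma R_three (h : Ctx α P t) : RR (ff α) (α ^ 3) = RR (ff α) (α ^ 1) := by
  have := h.R_frob (α ^ 1)
  rw [← pow_mul, h.R_mod, h.hP, show (1 * (8 * t + 3)) % 4 = 3 by omega] at this
  exact this

lemma norm_eq (h : Ctx α P t) : hh α P t 1 ^ 2 + 2 * hh α P t (α ^ 1) ^ 2 = 2 * P := by
  have h1 := h.R_eq one_ne_zero
  have h2 := h.R_eq (pow_ne_zero 1 h.ne0)
  have h3 := h.R_two
  have h4 := h.R_three
  have h5 := h.R_sum
  linarith

end Ctx

namespace Ctx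

variable {α : F} {P t : ℕ}

lemma sum_pow (h : Ctx α P t) (e : ℕ) (he : 0 < e) :
    ∑ y : F, y ^ e = if 8 * ((4 * t + 1) * (2 * t + 1)) ∣ e then -1 else 0 := by
  split_ifs with hd
  · rw [← Finset.add_sum_erase _ _ (Finset.mem_univ (0 : F)), zero_pow he.ne', zero_add]
    have : ∀ y ∈ univ.erase (0 : F), y ^ e = 1 := by
      intro y hy
      obtain ⟨k, rfl⟩ := hd
      rw [← h.card_sub, pow_mul,
        FiniteField.pow_card_sub_one_eq_one y (Finset.ne_of_mem_erase hy), one_pow]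
    rw [Finset.sum_congr rfl this, Finset.sum_const, Finset.card_erase_of_mem (Finset.mem_univ _),
      Finset.card_univ, nsmul_eq_mul, mul_one, Nat.cast_sub Fintype.card_pos,
      FiniteField.cast_card_eq_zero]
    simp
  · have e1 : ∑ y : F, (α * y) ^ e = ∑ y : F, y ^ e :=
      Equiv.sum_comp (Equiv.mulLeft₀ α h.ne0) (fun y => y ^ e)
    simp only [mul_pow] at e1
    rw [← Finset.mul_sum] at e1
    have e2 : α ^ e ≠ 1 := by
      rw [← pow_zero α, Ne, h.pow_eq, Nat.modEq_zero_iff_dvd]; exact hd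
    have e3 : (α ^ e - 1) * ∑ y : F, y ^ e = 0 := by linear_combination e1
    exact (mul_eq_zero.mp e3).resolve_left (sub_ne_zero.mpr e2)

/-- the partial sums with the polynomial `(y - y^P)^M`. -/
lemma sum_poly (h : Ctx α P t) (k : ℕ) (hk : 0 < k) :
    ∑ y : F, y ^ (k * ((4 * t + 1) * (2 * t + 1))) * (y - y ^ P) ^ (4 * t + 1)
      = ∑ i ∈ range (4 * t + 1 + 1), (-1) ^ (4 * t + 1 - i) * ((4 * t + 1).choose i : F) *
        (if 8 * (2 * t + 1) ∣ (k * (2 * t + 1) + 2 * (4 * t + 1 - i) + 1) then -1 else 0) := by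
  simp_rw [sub_eq_add_neg, add_pow, Finset.mul_sum]
  rw [Finset.sum_comm]
  apply Finset.sum_congr rfl
  intro i hi
  rw [Finset.mem_range] at hi
  have e : k * ((4 * t + 1) * (2 * t + 1)) + i + P * (4 * t + 1 - i)
      = (4 * t + 1) * (k * (2 * t + 1) + 2 * (4 * t + 1 - i) + 1) := by
    obtain ⟨j, hj⟩ : ∃ j, 4 * t + 1 = i + j := ⟨4 * t + 1 - i, by omega⟩
    have h1 : 4 * t + 1 - i = j := by omega
    have h2 : P = 2 * (4 * t + 1) + 1 := by rw [h.hP]; ring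
    rw [h1, h2]
    have h3 : i = 4 * t + 1 - j := by omega
    have h4 : i + j = 4 * t + 1 := hj.symm
    nlinarith
  have hs := h.sum_pow (k * ((4 * t + 1) * (2 * t + 1)) + i + P * (4 * t + 1 - i)) (by positivity)
  have hiff : (8 * ((4 * t + 1) * (2 * t + 1)) ∣
      (4 * t + 1) * (k * (2 * t + 1) + 2 * (4 * t + 1 - i) + 1)) ↔
      (8 * (2 * t + 1) ∣ (k * (2 * t + 1) + 2 * (4 * t + 1 - i) + 1)) := by
    rw [show 8 * ((4 * t + 1) * (2 * t + 1)) = (4 * t + 1) * (8 * (2 * t + 1)) by ring]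
    exact Nat.mul_dvd_mul_iff_left (by omega)
  rw [e] at hs
  simp only [hiff] at hs
  rw [← hs, Finset.mul_sum]
  apply Finset.sum_congr rfl
  intro y _
  rw [← e, neg_pow, pow_add, pow_add, pow_mul y P]
  ring

lemma nd {t r k : ℕ} (h0 : 0 < r) (h1 : r < 8 * (2 * t + 1)) (hk : k = r) :
    ¬ (8 * (2 * t + 1) ∣ k) := by
  subst hk
  intro hd
  have := Nat.le_of_dvd h0 hd
  omega

lemma sum_poly1 (h : Ctx α P t) :
    ∑ y : F, y ^ (1 * ((4 * t + 1) * (2 * t + 1))) * (y - y ^ P) ^ (4 * t + 1) = 0 := by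
  rw [h.sum_poly 1 (by norm_num)]
  apply Finset.sum_eq_zero
  intro i hi
  rw [Finset.mem_range] at hi
  rw [if_neg (nd _ _ rfl), mul_zero] <;> omega

lemma sum_poly3 (h : Ctx α P t) :
    ∑ y : F, y ^ (3 * ((4 * t + 1) * (2 * t + 1))) * (y - y ^ P) ^ (4 * t + 1) = 0 := by
  rw [h.sum_poly 3 (by norm_num)]
  apply Finset.sum_eq_zero
  intro i hi
  rw [Finset.mem_range] at hi
  rw [if_neg (nd _ _ rfl), mul_zero] <;> omega

lemma dvd_iff_one {a k : ℕ} (h0 : 0 < k) (h1 : k < 2 * a) : a ∣ k ↔ k = a := by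
  constructor
  · rintro ⟨c, rfl⟩
    have : c < 2 := by
      by_contra hc
      have : a * 2 ≤ a * c := Nat.mul_le_mul_left a (by omega)
      omega
    have : c ≠ 0 := by rintro rfl; simp at h0
    have : c = 1 := by omega
    simp [this]
  · rintro rfl; exact dvd_rfl

lemma sum_poly5 (h : Ctx α P t) :
    ∑ y : F, y ^ (5 * ((4 * t + 1) * (2 * t + 1))) * (y - y ^ P) ^ (4 * t + 1)
      = (-1) ^ t * ((4 * t + 1).choose t : F) := by
  rw [h.sum_poly 5 (by norm_num), Finset.sum_eq_single t]
  · rw [if_pos ⟨1, by omega⟩, show 4 * t + 1 - t = 2 * t + (t + 1) by omega, pow_add, pow_mul]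
    rw [pow_succ]; ring
  · intro i hi hne
    rw [Finset.mem_range] at hi
    rw [if_neg, mul_zero]
    rw [dvd_iff_one (by omega) (by omega)]
    omega
  · intro hn; rw [Finset.mem_range] at hn; omega

lemma sum_poly7 (h : Ctx α P t) :
    ∑ y : F, y ^ (7 * ((4 * t + 1) * (2 * t + 1))) * (y - y ^ P) ^ (4 * t + 1)
      = - ((-1) ^ t * ((4 * t + 1).choose t : F)) := by
  rw [h.sum_poly 7 (by norm_num), Finset.sum_eq_single (3 * t + 1)]
  · rw [if_pos ⟨1, by omega⟩, show 4 * t + 1 - (3 * t + 1) = t by omega,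
      Nat.choose_symm_of_eq_add (show 4 * t + 1 = (3 * t + 1) + t by omega)]
    ring
  · intro i hi hne
    rw [Finset.mem_range] at hi
    rw [if_neg, mul_zero]
    rw [dvd_iff_one (by omega) (by omega)]
    omega
  · intro hn; rw [Finset.mem_range] at hn; omega

lemma ff_cast (h : Ctx α P t) (y : F) :
    2 * (α ^ ((4 * t + 1) * (2 * t + 1)) - (α ^ ((4 * t + 1) * (2 * t + 1))) ^ 3) *
      ((ff α y : ℤ) : F)
    = y ^ (3 * ((4 * t + 1) * (2 * t + 1))) + y ^ (5 * ((4 * t + 1) * (2 * t + 1)))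
      - y ^ (1 * ((4 * t + 1) * (2 * t + 1))) - y ^ (7 * ((4 * t + 1) * (2 * t + 1))) := by
  by_cases hy : y = 0
  · subst hy
    simp [ff_zero]
  · obtain ⟨n, rfl⟩ := h.ex hy
    rw [h.ff_pow]
    set N := (4 * t + 1) * (2 * t + 1) with hN
    set w := α ^ N with hw
    have e : ∀ k : ℕ, (α ^ n) ^ (k * N) = w ^ (k * n) := by
      intro k; rw [hw, ← pow_mul, ← pow_mul]; congr 1; ring
    have h4 : w ^ 4 = -1 := by rw [hw, ← pow_mul, mul_comm, h.neg_one]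
    have h8 : w ^ 8 = 1 := by linear_combination (w ^ 4 - 1) * h4
    have em : ∀ k : ℕ, w ^ (k * n) = w ^ ((k * (n % 8)) % 8) := by
      intro k
      have : (k * n) % 8 = (k * (n % 8)) % 8 := by simp [Nat.mul_mod]
      rw [← this]
      conv_lhs => rw [← Nat.div_add_mod (k * n) 8, pow_add, pow_mul, h8, one_pow, one_mul]
    rw [e, e, e, e, em, em, em, em, gg_mod]
    have hn : n % 8 < 8 := Nat.mod_lt _ (by norm_num)
    generalize n % 8 = r at hn
    have h5 : w ^ 5 = -w := by linear_combination w * h4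
    have h6 : w ^ 6 = -w ^ 2 := by linear_combination w ^ 2 * h4
    have h7 : w ^ 7 = -w ^ 3 := by linear_combination w ^ 3 * h4
    interval_cases r <;> simp [gg, h4, h5, h6, h7] <;> ring

lemma T_eq (h : Ctx α P t) :
    ∑ y : F, ((ff α y : ℤ) : F) * (y - y ^ P) ^ (4 * t + 1)
      = (2 * tau α t) ^ (4 * t + 1) * ∑ _c ∈ (KK F P).erase 0, ((hh α P t 1 : ℤ) : F) := by
  rw [h.sumKK, ← Finset.add_sum_erase _ _ h.K_zero, Finset.mul_sum]
  have z : ∑ s ∈ KK F P, ((ff α (0 * tau α t + s) : ℤ) : F) *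
      ((0 * tau α t + s) - (0 * tau α t + s) ^ P) ^ (4 * t + 1) = 0 := by
    apply Finset.sum_eq_zero
    intro s hs
    rw [zero_mul, zero_add, mem_KK.mp hs, sub_self, zero_pow (by omega), mul_zero]
  rw [z, zero_add]
  apply Finset.sum_congr rfl
  intro c hc
  obtain ⟨hc0, hcK⟩ := Finset.mem_erase.mp hc
  have e : ∀ s ∈ KK F P, ((ff α (c * tau α t + s) : ℤ) : F) *
      ((c * tau α t + s) - (c * tau α t + s) ^ P) ^ (4 * t + 1) =
      ((ff α (c * tau α t + s) : ℤ) : F) * (2 * tau α t * c) ^ (4 * t + 1) := by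
    intro s hs
    rw [h.frob, mul_pow c, h.tau_pow, mem_KK.mp hs, mem_KK.mp hcK]
    congr 2; ring
  rw [Finset.sum_congr rfl e, ← Finset.sum_mul, ← Int.cast_sum,
    A_scale (ff α) (chi t) h.ff_K hcK hc0, Int.cast_mul, h.chi_cast hcK hc0, mul_pow (2 * tau α t)]
  have e2 : (c ^ (4 * t + 1)) * c ^ (4 * t + 1) = 1 := by
    rw [← h.chi_cast hcK hc0, ← Int.cast_mul, ← sq, chi_sq, Int.cast_one]
  have e3 : hh α P t 1 = ∑ u ∈ KK F P, ff α (tau α t + u) := by simp [hh]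
  rw [e3]
  linear_combination ((2 * tau α t) ^ (4 * t + 1) *
    ((∑ u ∈ KK F P, ff α (tau α t + u) : ℤ) : F)) * e2

lemma hh_ne (h : Ctx α P t) (hC : ((4 * t + 1).choose t : F) ≠ 0) :
    ((hh α P t 1 : ℤ) : F) ≠ 0 := by
  intro h0
  have hT := h.T_eq
  rw [h0, Finset.sum_const_zero, mul_zero] at hT
  have e : 2 * (α ^ ((4 * t + 1) * (2 * t + 1)) - (α ^ ((4 * t + 1) * (2 * t + 1))) ^ 3) *
      ∑ y : F, ((ff α y : ℤ) : F) * (y - y ^ P) ^ (4 * t + 1)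
      = 2 * ((-1) ^ t * ((4 * t + 1).choose t : F)) := by
    have e0 := h.sum_poly3
    have e1 := h.sum_poly1
    have e2 := h.sum_poly5
    have e3 := h.sum_poly7
    have e4 : 2 * ((-1) ^ t * ((4 * t + 1).choose t : F)) = 0 + (-1) ^ t * ((4 * t + 1).choose t : F)
      - 0 - -((-1) ^ t * ((4 * t + 1).choose t : F)) := by ring
    rw [e4, ← e3, ← e2]
    nth_rewrite 1 [← e0]
    rw [← e1, ← Finset.sum_add_distrib, ← Finset.sum_sub_distrib, ← Finset.sum_sub_distrib,
      Finset.mul_sum]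
    apply Finset.sum_congr rfl
    intro y _
    rw [← mul_assoc, h.ff_cast]
    ring
  rw [hT, mul_zero] at e
  have : (2 : F) * ((-1) ^ t * ((4 * t + 1).choose t : F)) ≠ 0 :=
    mul_ne_zero h.two_ne (mul_ne_zero (pow_ne_zero _ (by simp)) hC)
  exact this e.symm

end Ctx

lemma uniq_rep {p r : ℕ} (hp : p.Prime) (hp2 : p ≠ 2) (X Y w : ℤ)
    (h1 : X ^ 2 + 2 * Y ^ 2 = (p : ℤ) ^ r) (h2 : 1 + 2 * w ^ 2 = (p : ℤ) ^ r)
    (hY : ¬ (p : ℤ) ∣ Y) : X ^ 2 = 1 := by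
  have hpp : Prime (p : ℤ) := Nat.prime_iff_prime_int.mp hp
  have hP : (0 : ℤ) < (p : ℤ) ^ r := by have := hp.pos; positivity
  have key : ∀ e : ℤ, e ^ 2 = 1 → (p : ℤ) ^ r ∣ (X * w - e * Y) → X ^ 2 = 1 := by
    rintro e he ⟨k, hk⟩
    have b : ((p : ℤ) ^ r) ^ 2 = (X + 2 * e * w * Y) ^ 2 + 2 * (X * w - e * Y) ^ 2 := by
      have : (X ^ 2 + 2 * Y ^ 2) * (1 + 2 * w ^ 2) =
          (X + 2 * e * w * Y) ^ 2 + 2 * (X * w - e * Y) ^ 2 := by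
        linear_combination (- 4 * w ^ 2 * Y ^ 2 - 2 * Y ^ 2) * he
      rw [← this, h1, h2]; ring
    rw [hk] at b
    have hk0 : k = 0 := by
      by_contra hk0
      have : 1 ≤ k ^ 2 := by have := sq_pos_of_ne_zero hk0; omega
      nlinarith [sq_nonneg (X + 2 * e * w * Y), sq_pos_of_pos hP]
    rw [hk0, mul_zero] at hk
    have hY2 : Y ^ 2 = X ^ 2 * w ^ 2 := by
      linear_combination (-1) * (X * w + e * Y) * hk - Y ^ 2 * he
    have : (p : ℤ) ^ r * X ^ 2 = (p : ℤ) ^ r * 1 := by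
      rw [mul_one]
      nth_rewrite 1 [← h2]
      rw [← h1, hY2]; ring
    exact mul_left_cancel₀ hP.ne' this
  have hd : (p : ℤ) ^ r ∣ (X * w - 1 * Y) * (X * w - (-1) * Y) :=
    ⟨w ^ 2 - Y ^ 2, by linear_combination w ^ 2 * h1 - Y ^ 2 * h2⟩
  by_cases hp1 : (p : ℤ) ∣ (X * w - 1 * Y)
  · have hp3 : ¬ (p : ℤ) ∣ (X * w - (-1) * Y) := by
      intro hp3
      have := dvd_sub hp3 hp1
      rw [show X * w - (-1) * Y - (X * w - 1 * Y) = 2 * Y by ring] at this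
      rcases hpp.dvd_or_dvd this with h | h
      · have h' : p ∣ 2 := by exact_mod_cast h
        exact hp2 ((Nat.prime_dvd_prime_iff_eq hp Nat.prime_two).mp h')
      · exact hY h
    exact key 1 (by norm_num) ((hpp.coprime_iff_not_dvd.mpr hp3).pow_left.dvd_of_dvd_mul_right hd)
  · exact key (-1) (by norm_num)
      ((hpp.coprime_iff_not_dvd.mpr hp1).pow_left.dvd_of_dvd_mul_left hd)

lemma choose_step {p : ℕ} (hp : p.Prime) (n k a b : ℕ) (ha : a < p) (hba : b ≤ a)
    (h : ¬ p ∣ n.choose k) : ¬ p ∣ (a + p * n).choose (b + p * k) := by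
  have := Fact.mk hp
  have := Choose.choose_modEq_choose_mod_mul_choose_div_nat (p := p) (n := a + p * n)
    (k := b + p * k)
  rw [Nat.add_mul_mod_self_left, Nat.add_mul_mod_self_left, Nat.mod_eq_of_lt ha,
    Nat.mod_eq_of_lt (hba.trans_lt ha), Nat.add_mul_div_left _ _ hp.pos,
    Nat.add_mul_div_left _ _ hp.pos, Nat.div_eq_of_lt ha, Nat.div_eq_of_lt (hba.trans_lt ha),
    zero_add, zero_add] at this
  rw [this.dvd_iff dvd_rfl, hp.dvd_mul, not_or]
  refine ⟨?_, h⟩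
  intro hd
  have h1 : p ∣ a.factorial := by
    rw [← Nat.choose_mul_factorial_mul_factorial hba]
    exact (hd.mul_right _).mul_right _
  exact absurd ((hp.dvd_factorial).mp h1) (by omega)

lemma choose_ndvd {p : ℕ} (hp : p.Prime) (hp8 : p % 8 = 3) (k : ℕ) :
    ∃ t : ℕ, p ^ (2 * k + 1) = 8 * t + 3 ∧ ¬ p ∣ (4 * t + 1).choose t := by
  obtain ⟨s, hs⟩ : ∃ s, p = 8 * s + 3 := ⟨p / 8, by omega⟩
  induction k with
  | zero =>
    refine ⟨s, by simpa using hs, ?_⟩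
    have := choose_step hp 0 0 (4 * s + 1) s (by omega) (by omega) (by
      simpa using hp.one_lt.ne')
    simpa using this
  | succ k ih =>
    obtain ⟨t, ht, hc⟩ := ih
    have h1 := choose_step hp _ _ (4 * s + 1) (3 * s + 1) (by omega) (by omega) hc
    have h2 := choose_step hp _ _ (4 * s + 1) s (by omega) (by omega) h1
    refine ⟨s + p * (3 * s + 1 + p * t), ?_, ?_⟩
    · rw [show 2 * (k + 1) + 1 = (2 * k + 1) + 2 by ring, pow_add, ht]
      rw [hs]; ring
    · convert h2 using 3
      rw [hs]; ring

/-- indicator -/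
def ind (D : Finset F) (y : F) : ℤ := if y ∈ D then 1 else 0

lemma intDiff_eq (D A : Finset F) (lam mu : ℕ) (hA : (0 : F) ∉ A)
    (H : ∀ d : F, d ≠ 0 → RR (ind D) d = if d ∈ A then (lam : ℤ) else mu) :
    intDiff D = lam • (A.erase 0).val + mu • (Gstar F \ A).val := by
  ext d
  rw [Multiset.count_add, Multiset.count_nsmul, Multiset.count_nsmul,
    Multiset.count_eq_of_nodup (A.erase 0).nodup, Multiset.count_eq_of_nodup (Gstar F \ A).nodup]
  simp only [Finset.mem_val]
  rw [intDiff, Multiset.count_map]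
  by_cases hd : d = 0
  · subst hd
    have : Multiset.filter (fun a : F × F => 0 = a.1 - a.2)
        ((D ×ˢ D).filter (fun p => p.1 ≠ p.2)).val = 0 := by
      rw [Multiset.filter_eq_nil]
      rintro ⟨a, b⟩ hab e
      rw [Finset.mem_val, Finset.mem_filter] at hab
      exact hab.2 (sub_eq_zero.mp e.symm)
    rw [this]
    simp [Gstar]
  · have h1 := H d hd
    have h2 : (Multiset.card (Multiset.filter (fun a : F × F => d = a.1 - a.2)
        ((D ×ˢ D).filter (fun p => p.1 ≠ p.2)).val) : ℤ) = RR (ind D) d := by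
      have e1 : RR (ind D) d = ((univ.filter (fun y => y + d ∈ D ∧ y ∈ D)).card : ℤ) := by
        unfold RR ind
        rw [Finset.card_filter]
        push_cast
        apply Finset.sum_congr rfl
        intro y _
        by_cases h1 : y + d ∈ D <;> by_cases h2 : y ∈ D <;> simp [h1, h2]
      rw [e1]
      norm_cast
      rw [← Finset.filter_val, Finset.card_val]
      apply Finset.card_bij' (fun p _ => p.2) (fun y _ => (y + d, y))
      · rintro ⟨a, b⟩ hab
        simp only [Finset.mem_filter, Finset.mem_product, Finset.mem_univ, true_and] at hab ⊢
        obtain ⟨⟨⟨ha, hb⟩, _⟩, rfl⟩ := hab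
        simpa using ⟨ha, hb⟩
      · intro y hy
        simp only [Finset.mem_filter, Finset.mem_product, Finset.mem_univ, true_and] at hy ⊢
        simp [hy, hd]
      · rintro ⟨a, b⟩ hab
        simp only [Finset.mem_filter] at hab
        rw [hab.2]; simp
      · intros; rfl
    rw [h1] at h2
    have : (d ∈ A.erase 0) ↔ d ∈ A := by simp [hd]
    have h3 : (d ∈ Gstar F \ A) ↔ d ∉ A := by simp [Gstar, hd]
    simp only [this, h3]
    by_cases hdA : d ∈ A
    · simp only [hdA, if_true, not_true, if_false] at h2 ⊢
      rw [mul_one, mul_zero, add_zero]; exact_mod_cast h2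
    · simp only [hdA, if_false, not_false_eq_true, if_true] at h2 ⊢
      rw [mul_one, mul_zero, zero_add]; exact_mod_cast h2

lemma sum_ind (D : Finset F) : ∑ y, ind D y = (D.card : ℤ) := by
  unfold ind; simp

namespace Ctx

variable {α : F} {P t : ℕ}

lemma zero_not_mem (h : Ctx α P t) (e i : ℕ) : (0 : F) ∉ cycClass α e i := by
  rw [cycClass, Finset.mem_image]
  rintro ⟨j, _, hj⟩
  exact pow_ne_zero _ h.ne0 hj

lemma mem_cyc (h : Ctx α P t) {e : ℕ} (he : e ∣ 8) (i n : ℕ) :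
    α ^ n ∈ cycClass α e i ↔ n % e = i % e := by
  rw [cycClass, Finset.mem_image]
  have hN : 0 < (4 * t + 1) * (2 * t + 1) := by positivity
  have hc := h.card_sub
  have e0 : α ^ (8 * ((4 * t + 1) * (2 * t + 1))) = 1 := by rw [← h.order, pow_orderOf_eq_one]
  generalize (4 * t + 1) * (2 * t + 1) = N at *
  constructor
  · rintro ⟨j, _, hj⟩
    have h1 : (e * j + i) ≡ n [MOD e] := (show (e * j + i) ≡ n [MOD 8] from h.mod8 hj).of_dvd he
    have h2 : (e * j + i) % e = n % e := h1
    rw [Nat.mul_add_mod] at h2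
    exact h2.symm
  · intro hn
    have hle : i ≤ 8 * N * i := Nat.le_mul_of_pos_left _ (by omega)
    have hd : e ∣ (n + 8 * N * i) - i := by
      rw [← Nat.modEq_iff_dvd' (by omega)]
      have h8 : e ∣ 8 * N * i := (he.mul_right N).mul_right i
      change i % e = (n + 8 * N * i) % e
      rw [Nat.add_mod, Nat.mod_eq_zero_of_dvd h8, add_zero, Nat.mod_mod, hn]
    obtain ⟨j, hj⟩ := hd
    refine ⟨j % (8 * N), Finset.mem_range.mpr ?_, ?_⟩
    · have := Nat.mod_lt j (show 0 < 8 * N by omega)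
      omega
    · have e1 : e * j + i = n + 8 * N * i := by omega
      have e2 : α ^ (e * j + i) = α ^ n := by
        rw [e1, pow_add, pow_mul, e0, one_pow, mul_one]
      rw [← e2]
      have e3 : e * j + i = e * (j % (8 * N)) + i + 8 * N * (e * (j / (8 * N))) := by
        conv_lhs => rw [← Nat.mod_add_div j (8 * N)]
        ring
      rw [e3, pow_add _ (e * (j % (8 * N)) + i), pow_mul α (8 * N), e0, one_pow, mul_one]

lemma even_A (h : Ctx α P t) (l : ℕ) {d : F} (hd : d ≠ 0) :
    RR (ind (cycClass α 4 l)) d = if d ∈ cycClass α 4 l then (4 * (t : ℤ) ^ 2 + 6 * t + 1)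
      else 4 * (t : ℤ) ^ 2 + 2 * t := by
  have hmem := h.mem_cyc (show 4 ∣ 8 by norm_num) l
  have hPz : (P : ℤ) = 8 * t + 3 := by rw [h.hP]; push_cast; ring
  rw [h.even_R (ind (cycClass α 4 l)) (2 * t + 1) (by simp [ind, h.zero_not_mem])
    (by intro y; unfold ind; split_ifs <;> norm_num) ?_ ?_ hd]
  · unfold ind
    split_ifs <;> rw [hPz] <;> ring
  · intro c hc hc0 y
    obtain ⟨j, rfl⟩ := h.K_ex hc hc0
    by_cases hy : y = 0
    · simp [hy]
    · obtain ⟨n, rfl⟩ := h.ex hy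
      unfold ind
      have e : ((8 * t + 4) * j + n) % 4 = n % 4 := by
        rw [show (8 * t + 4) * j + n = 4 * ((2 * t + 1) * j) + n by ring, Nat.mul_add_mod]
      simp only [← pow_add, hmem, e]
  · have := h.avg (ind (cycClass α 4 l)) 4 1 (by simp [ind, h.zero_not_mem]) (by
      intro y hy
      obtain ⟨n, rfl⟩ := h.ex hy
      simp only [Finset.sum_range_succ, Finset.sum_range_zero, ← pow_add, ind, hmem]
      split_ifs <;> omega)
    rw [hPz] at this ⊢
    push_cast at this
    linarith

lemma card_A (h : Ctx α P t) (l : ℕ) : 4 * ((cycClass α 4 l).card : ℤ) = (P : ℤ) ^ 2 - 1 := by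
  have hmem := h.mem_cyc (show 4 ∣ 8 by norm_num) l
  have := h.avg (ind (cycClass α 4 l)) 4 1 (by simp [ind, h.zero_not_mem]) (by
      intro y hy
      obtain ⟨n, rfl⟩ := h.ex hy
      simp only [Finset.sum_range_succ, Finset.sum_range_zero, ← pow_add, ind, hmem]
      split_ifs <;> omega)
  rw [sum_ind] at this
  push_cast at this
  linarith

lemma even_S (h : Ctx α P t) (n : ℕ) :
    RR (fun y => ff α y ^ 2) (α ^ n) = 16 * (t : ℤ) ^ 2 + 12 * t + 2 - gg n ^ 2 := by
  have hPz : (P : ℤ) = 8 * t + 3 := by rw [h.hP]; push_cast; ring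
  have hsq : ∀ y, (ff α y ^ 2) ^ 2 = ff α y ^ 2 := by
    intro y
    by_cases hy : y = 0
    · simp [hy, ff_zero]
    · obtain ⟨n, rfl⟩ := h.ex hy
      rw [h.ff_pow, gg_sq_sq]
  rw [h.even_R (fun y => ff α y ^ 2) (4 * t + 2) (by simp [ff_zero]) hsq ?_ ?_
    (pow_ne_zero _ h.ne0)]
  · rw [h.ff_pow, hPz]
    linear_combination gg_sq_sq n
  · intro c hc hc0 y
    rw [h.ff_K c hc hc0, mul_pow, chi_sq, one_mul]
  · have := h.R_zero
    unfold RR at this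
    simp only [add_zero, ← sq] at this
    rw [hPz] at this ⊢
    linarith

lemma cross (h : Ctx α P t) (d : F) :
    RR (fun y => ff α y ^ 2 + ff α y) d = RR (fun y => ff α y ^ 2) d + RR (ff α) d := by
  have e1 : ∑ y, ff α (y + d) * ff α y ^ 2 = - ∑ y, ff α (y + d) ^ 2 * ff α y := by
    rw [← Equiv.sum_comp (Equiv.subLeft (-d)) (fun y => ff α (y + d) ^ 2 * ff α y),
      ← Finset.sum_neg_distrib]
    apply Finset.sum_congr rfl
    intro y _
    simp only [Equiv.subLeft_apply]
    rw [show -d - y + d = -y by ring, show -d - y = -(y + d) by ring, h.ff_neg, h.ff_neg]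
    ring
  unfold RR
  have e2 : ∀ y, (ff α (y + d) ^ 2 + ff α (y + d)) * (ff α y ^ 2 + ff α y) =
      ff α (y + d) ^ 2 * ff α y ^ 2 + ff α (y + d) * ff α y +
      (ff α (y + d) * ff α y ^ 2 + ff α (y + d) ^ 2 * ff α y) := by intro y; ring
  simp_rw [e2, Finset.sum_add_distrib, e1]
  ring

lemma ind_D (h : Ctx α P t) (i : ℕ) (y : F) :
    2 * ind (cycClass α 8 i ∪ cycClass α 8 (i + 2)) (α ^ (i + 5) * y) = ff α y ^ 2 + ff α y := by
  by_cases hy : y = 0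
  · simp [hy, ff_zero, ind, h.zero_not_mem]
  · obtain ⟨n, rfl⟩ := h.ex hy
    unfold ind
    rw [← pow_add, h.ff_pow]
    have e : ((i + 5 + n) % 8 = i % 8 ∨ (i + 5 + n) % 8 = (i + 2) % 8) ↔ (n % 8 = 3 ∨ n % 8 = 5) := by
      omega
    simp only [Finset.mem_union, h.mem_cyc dvd_rfl, e, gg]
    split_ifs <;> norm_num

lemma skew (h : Ctx α P t) (h0 : hh α P t 1 ^ 2 = 2 * P - 2) (i l q : ℕ) (hl : l % 4 = (i + 1) % 4)
    (hq : q = P ^ 2) :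
    IsSkewPDS (cycClass α 8 i ∪ cycClass α 8 (i + 2)) (cycClass α 4 l) q ((q - 1) / 4)
      (4 * t ^ 2 + 6 * t + 1) (4 * t ^ 2 + 2 * t) := by
  have hPz : (P : ℤ) = 8 * t + 3 := by rw [h.hP]; push_cast; ring
  have hk : ∀ k : ℕ, 4 * (k : ℤ) = (P : ℤ) ^ 2 - 1 → k = (q - 1) / 4 := by
    intro k hk
    have : 4 * k + 1 = q := by rw [hq]; zify; linarith
    omega
  have hmem := h.mem_cyc (show 4 ∣ 8 by norm_num) l
  refine ⟨⟨?_, hk _ (h.card_A l), ?_⟩, hk _ ?_, ?_⟩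
  · rw [h.card, hq]
  · apply intDiff_eq _ _ _ _ (h.zero_not_mem 4 l)
    intro d hd
    rw [h.even_A l hd]
    push_cast
    rfl
  · rw [← sum_ind, ← Equiv.sum_comp (Equiv.mulLeft₀ (α ^ (i + 5)) (pow_ne_zero _ h.ne0))]
    simp only [Equiv.mulLeft₀_apply]
    have e := Finset.sum_congr (rfl : (univ : Finset F) = univ) (fun y _ => h.ind_D i y)
    rw [← Finset.mul_sum, Finset.sum_add_distrib, h.sum_ff] at e
    have := h.R_zero
    unfold RR at this
    simp only [add_zero, ← sq] at this
    linarith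
  · apply intDiff_eq _ _ _ _ (h.zero_not_mem 4 l)
    intro d hd
    have hne : α ^ (i + 5) ≠ 0 := pow_ne_zero _ h.ne0
    obtain ⟨n, hn⟩ := h.ex (mul_ne_zero (inv_ne_zero hne) hd)
    have hd' : d = α ^ (i + 5) * α ^ n := by rw [← hn]; field_simp
    rw [hd', ← RR_scale _ hne, ← pow_add]
    have e4 : 4 * RR (fun y => ind (cycClass α 8 i ∪ cycClass α 8 (i + 2)) (α ^ (i + 5) * y)) (α ^ n)
        = RR (fun y => ff α y ^ 2 + ff α y) (α ^ n) := by
      unfold RR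
      rw [Finset.mul_sum]
      apply Finset.sum_congr rfl
      intro y _
      simp only
      rw [← h.ind_D i, ← h.ind_D i]; ring
    rw [h.cross, h.even_S, h.R_mod] at e4
    have r0 := h.R_eq one_ne_zero
    have r1 := h.R_eq (pow_ne_zero 1 h.ne0)
    have r2 := h.R_two
    have r3 := h.R_three
    have ne := h.norm_eq
    have hcond : ((i + 5 + n) % 4 = l % 4) ↔ n % 4 = 0 := by omega
    simp only [hmem, hcond]
    push_cast
    rw [h0] at r0 ne
    have hn4 : n % 4 = 0 ∨ n % 4 = 1 ∨ n % 4 = 2 ∨ n % 4 = 3 := by omega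
    rcases hn4 with hn4 | hn4 | hn4 | hn4
    · have hg : gg n = 0 := by unfold gg; split_ifs <;> omega
      rw [hn4, pow_zero, hg] at e4
      rw [if_pos hn4]
      linarith
    · have hg : gg n ^ 2 = 1 := by unfold gg; split_ifs <;> omega
      rw [hn4, hg] at e4
      rw [if_neg (by omega)]
      linarith
    · have hg : gg n = 0 := by unfold gg; split_ifs <;> omega
      rw [hn4, hg] at e4
      rw [if_neg (by omega)]
      linarith
    · have hg : gg n ^ 2 = 1 := by unfold gg; split_ifs <;> omega
      rw [hn4, hg, r3] at e4
      rw [if_neg (by omega)]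
      linarith

end Ctx

end SkewAux

/-- Let `q = p^m` with `p ≡ 3 (mod 8)` prime and `m ≡ 2 (mod 4)`; let
`x, a, b` be integers with `x² = q`, `q = a² + 2b²`, `a ≡ 1 (mod 4)` and `x + a = -2`.
Then `D = C_3^8 ∪ C_5^8` is a skew PDS corresponding to the
`(q,(q-1)/4,(q-11-6x)/16,(q-3+2x)/16)`-PDS `C_0^4`, and more generally for `0 ≤ i ≤ 7`
the set `C_i^8 ∪ C_{i+2}^8` is a skew PDS corresponding to the PDS `C_{i+1}^4` (with
the same parameters; indices of cyclotomic classes are automatically periodic). -/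
theorem stmt_4 {F : Type*} [Field F] [Fintype F] [DecidableEq F]
    (q p m : ℕ) (hp : p.Prime) (hp8 : p % 8 = 3) (hm : m % 4 = 2)
    (hq : Fintype.card F = q) (hqpm : q = p ^ m)
    (α : F) (hα : IsPrimitiveElt α)
    (x a b : ℤ) (hx : x ^ 2 = (q : ℤ)) (hab : (q : ℤ) = a ^ 2 + 2 * b ^ 2)
    (ha4 : a % 4 = 1) (hxa : x + a = -2) :
    ∃ lam mu : ℕ,
      16 * (lam : ℤ) = (q : ℤ) - 11 - 6 * x ∧
      16 * (mu : ℤ) = (q : ℤ) - 3 + 2 * x ∧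
      IsSkewPDS (cycClass α 8 3 ∪ cycClass α 8 5) (cycClass α 4 0)
        q ((q - 1) / 4) lam mu ∧
      (∀ i : ℕ, i ≤ 7 →
        IsSkewPDS (cycClass α 8 i ∪ cycClass α 8 (i + 2)) (cycClass α 4 (i + 1))
          q ((q - 1) / 4) lam mu) := by
  obtain ⟨k, hk⟩ : ∃ k, m = 2 * (2 * k + 1) := ⟨m / 4, by omega⟩
  obtain ⟨t, ht, hC⟩ := choose_ndvd hp hp8 k
  have hfp : Fact p.Prime := ⟨hp⟩
  set P := p ^ (2 * k + 1) with hPdef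
  have hqP : q = P ^ 2 := by rw [hqpm, hk, hPdef, ← pow_mul]; congr 1; ring
  have hchar : CharP F p := charP_of_card_eq_prime_pow (hq.trans hqpm)
  have h : Ctx α P t := ⟨ht, hq.trans hqP, fun x y => add_pow_char_pow x y p (2 * k + 1), hα⟩
  have hPz : (P : ℤ) = 8 * t + 3 := by rw [ht]; push_cast; ring
  have hxP : x = -(P : ℤ) := by
    have : x ^ 2 = (P : ℤ) ^ 2 := by rw [hx, hqP]; push_cast; ring
    rcases sq_eq_sq_iff_eq_or_eq_neg.mp this with e | e
    · omega
    · exact e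
  have haP : a = (P : ℤ) - 2 := by omega
  have hb : b ^ 2 = 2 * (P : ℤ) - 2 := by
    have : (P : ℤ) ^ 2 = a ^ 2 + 2 * b ^ 2 := by rw [← hab, hqP]; push_cast; ring
    rw [haP] at this
    linarith
  obtain ⟨w, hw⟩ : ∃ w, b = 2 * w := by
    have : Even (b ^ 2) := ⟨(P : ℤ) - 1, by rw [hb]; ring⟩
    obtain ⟨w, hw⟩ := (Int.even_pow.mp this).1
    exact ⟨w, by omega⟩
  have hw2 : 1 + 2 * w ^ 2 = (p : ℤ) ^ (2 * k + 1) := by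
    have : (P : ℤ) = (p : ℤ) ^ (2 * k + 1) := by rw [hPdef]; push_cast; rfl
    rw [← this]
    rw [hw] at hb
    linarith
  have hn := h.norm_eq
  obtain ⟨Y, hY⟩ : ∃ Y, Ctx.hh α P t 1 = 2 * Y := by
    have : Even (Ctx.hh α P t 1 ^ 2) := ⟨(P : ℤ) - Ctx.hh α P t (α ^ 1) ^ 2, by linarith⟩
    obtain ⟨w, hw⟩ := (Int.even_pow.mp this).1
    exact ⟨w, by omega⟩
  have hpY : ¬ (p : ℤ) ∣ Y := by
    intro hd
    apply h.hh_ne (by rw [Ne, CharP.cast_eq_zero_iff F p]; exact hC)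
    rw [CharP.intCast_eq_zero_iff F p, hY]
    exact hd.mul_left 2
  have h1 : Ctx.hh α P t (α ^ 1) ^ 2 = 1 := by
    apply uniq_rep hp (by omega) _ Y w _ hw2 hpY
    have : (P : ℤ) = (p : ℤ) ^ (2 * k + 1) := by rw [hPdef]; push_cast; rfl
    rw [← this]
    rw [hY] at hn
    linarith
  have h0 : Ctx.hh α P t 1 ^ 2 = 2 * P - 2 := by linarith
  refine ⟨4 * t ^ 2 + 6 * t + 1, 4 * t ^ 2 + 2 * t, ?_, ?_, ?_, ?_⟩
  · rw [hqP, hxP]; push_cast; rw [hPz]; ring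
  · rw [hqP, hxP]; push_cast; rw [hPz]; ring
  · exact h.skew h0 3 0 q (by norm_num) hqP
  · intro i _
    exact h.skew h0 i (i + 1) q rfl hqP
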